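/- Let (u_l, u_f) be a finite Stackelberg game with m = 2 leader actions, n ≥ 2 follower actions, utilities in [0,1], inducibility gap Δ > 0, and let δ ∈ (0, Δ). Then there exists a δ-RSE leader strategy x* (i.e., an x* ∈ Δ^m attaining u_RSE(δ)) such that max_{j ∈ BR_δ(x*)} u_l(x*, j) = min_{j ∈ BR_δ(x*)} u_l(x*, j); in other words, at some optimal leader strategy the leader's payoff is the same under every follower tie-breaking rule within the δ-optimal response set. -/

import Mathlib

open Finset Set

noncomputable section

/-- The simplex of mixed strategies over `m` actions. -/
def simplex (m : ℕ) : Set (Fin m → ℝ) := stdSimplex ℝ (Fin m)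

/-- Mixed-strategy extension of a utility matrix: `u(x, j) = ∑ i, x i * u i j`. -/
def mixU {m n : ℕ} (u : Fin m → Fin n → ℝ) (x : Fin m → ℝ) (j : Fin n) : ℝ :=
  ∑ i, x i * u i j

/-- The follower's δ-optimal response set (strict inequality):
`BR_δ(x) = {j : u_f(x,j) > max_{j'} u_f(x,j') - δ}`. -/
def BRd {m n : ℕ} (uf : Fin m → Fin n → ℝ) (δ : ℝ) (x : Fin m → ℝ) : Set (Fin n) :=
  {j | mixU uf x j > (⨆ j', mixU uf x j') - δ}

/-- The follower's exact best-response set. -/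
def BR0 {m n : ℕ} (uf : Fin m → Fin n → ℝ) (x : Fin m → ℝ) : Set (Fin n) :=
  {j | mixU uf x j = ⨆ j', mixU uf x j'}

/-- Worst-case leader utility over the follower's δ-optimal response set:
`min_{j ∈ BR_δ(x)} u_l(x, j)`. -/
def valBR {m n : ℕ} (ul uf : Fin m → Fin n → ℝ) (δ : ℝ) (x : Fin m → ℝ) : ℝ :=
  sInf (mixU ul x '' BRd uf δ x)

/-- The δ-RSE leader utility `u_RSE(δ) = sup_{x ∈ Δ^m} min_{j ∈ BR_δ(x)} u_l(x, j)`. -/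
def uRSE {m n : ℕ} (ul uf : Fin m → Fin n → ℝ) (δ : ℝ) : ℝ :=
  sSup (valBR ul uf δ '' simplex m)

/-- The SSE leader utility `u_SSE = sup_{x ∈ Δ^m} max_{j ∈ BR_0(x)} u_l(x, j)`. -/
def uSSE {m n : ℕ} (ul uf : Fin m → Fin n → ℝ) : ℝ :=
  sSup ((fun x => sSup (mixU ul x '' BR0 uf x)) '' simplex m)

/-- The maximin leader utility `u_MM = sup_{x ∈ Δ^m} min_{j ∈ [n]} u_l(x, j)`. -/
def uMM {m n : ℕ} (ul : Fin m → Fin n → ℝ) : ℝ :=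
  sSup ((fun x => ⨅ j, mixU ul x j) '' simplex m)

/-- The inducibility gap
`Δ = min_{j} sup_{x ∈ Δ^m} min_{j' ≠ j} (u_f(x, j) - u_f(x, j'))`. -/
def indGap {m n : ℕ} (uf : Fin m → Fin n → ℝ) : ℝ :=
  ⨅ j, sSup ((fun x => ⨅ j' : {k : Fin n // k ≠ j}, (mixU uf x j - mixU uf x j'.1)) '' simplex m)

/-!
Each follower action `j` has a leader strategy `p j` at which `j` is the only δ-optimal response.
Extrapolating the affine difference of two follower utilities, an action `b` still beats `a` by `δ`
at every point lying beyond `p b` as seen from `p a`. With two leader actions all strategies lie on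
a line, so if `j ≠ k` are both δ-optimal at `x` then `x` lies between `p j` and `p k`, and no third
action is δ-optimal on the way from `x` to `p k`.

Let `x` be optimal and `j` a worst δ-optimal response at `x`. If the leader's payoff is not constant
on the responses, pick another response `k`. Either moving to `p j` or to `p k` costs nothing, or
the payoff from `j` increases from `x` towards `p k` while the payoff from `k` ends up below its
starting value, so the two payoffs cross at a point at least as good as `x`, where they are the only
δ-optimal responses.
-/

/-- The strategy `x` makes follower action `j` better than every other action by at least `δ`. The
inducibility gap is the largest `δ` for which every action is induced by some mixed strategy. -/
def Induces {m n : ℕ} (uf : Fin m → Fin n → ℝ) (δ : ℝ) (j : Fin n) (x : Fin m → ℝ) : Prop :=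
  ∀ k, k ≠ j → mixU uf x k + δ ≤ mixU uf x j

/-- The utility `mixU u · j` of a fixed follower action as a linear functional of the leader's
strategy. -/
def mixULinear {m n : ℕ} (u : Fin m → Fin n → ℝ) (j : Fin n) : (Fin m → ℝ) →ₗ[ℝ] ℝ :=
  Fintype.linearCombination ℝ fun i => u i j

section Betweenness

variable {K V P : Type*} [Field K] [LinearOrder K] [IsStrictOrderedRing K]
  [AddCommGroup V] [Module K V] [AddTorsor V P]

lemma affineMap_le_of_wbtw_of_lt (f : P →ᵃ[K] K) {p q r : P} (h : Wbtw K p q r)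
    (hpq : f p < f q) : f q ≤ f r := by
  by_contra! hrq
  rcases le_total (f p) (f r) with hpr | hrp
  · exact hrq.not_ge ((wbtw_iff_of_le hpr).1 (h.map f)).2
  · exact hpq.not_ge ((wbtw_iff_of_le hrp).1 (h.map f).symm).2

lemma wbtw_or_wbtw_of_wbtw_of_wbtw {p q x y : P} (hx : Wbtw K p x q) (hy : Wbtw K p y q) :
    Wbtw K p y x ∨ Wbtw K x y q := by
  obtain ⟨s, _, rfl⟩ := hx
  obtain ⟨t, ht, rfl⟩ := hy
  rcases le_total t s with hts | hst
  · left
    simpa only [AffineMap.lineMap_apply_zero] using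
      (Wbtw.of_le_of_le ht.1 hts).map (AffineMap.lineMap p q)
  · right
    simpa only [AffineMap.lineMap_apply_one] using
      (Wbtw.of_le_of_le hst ht.2).map (AffineMap.lineMap p q)

end Betweenness

/-- `f` increases from `x` towards `q` because it increases from `p` to `x`,
so it overtakes `g`, which ends below the value `f x`. -/
lemma exists_mem_segment_eq_and_le {V : Type*} [AddCommGroup V] [Module ℝ V] [TopologicalSpace V]
    [ContinuousAdd V] [ContinuousSMul ℝ V] {f g : V →ᵃ[ℝ] ℝ} (hf : Continuous f)
    (hg : Continuous g) {p x q : V} (hx : Wbtw ℝ p x q) (hfp : f p < f x) (hfg : f x ≤ g x)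
    (hgq : g q < f x) : ∃ y ∈ segment ℝ x q, f y = g y ∧ f x ≤ f y := by
  have hmono : ∀ y, Wbtw ℝ x y q → f x ≤ f y := fun y hy =>
    affineMap_le_of_wbtw_of_lt f (hx.trans_right_left hy) hfp
  have hgf : g q ≤ f q := hgq.le.trans (hmono q (wbtw_self_right ℝ x q))
  obtain ⟨y, hy, hfgy⟩ := (convex_segment x q).isPreconnected.intermediate_value₂
    (left_mem_segment ℝ x q) (right_mem_segment ℝ x q) hf.continuousOn hg.continuousOn hfg hgf
  exact ⟨y, hy, hfgy, hmono y (mem_segment_iff_wbtw.1 hy)⟩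

lemma simplex_nonempty {m : ℕ} [NeZero m] : (simplex m).Nonempty :=
  ⟨_, single_mem_stdSimplex ℝ 0⟩

lemma collinear_simplex_two : Collinear ℝ (simplex 2) := by
  refine (collinear_iff_exists_forall_eq_smul_vadd _).2 ⟨![1, 0], ![-1, 1], fun x hx => ?_⟩
  have hsum : x 0 + x 1 = 1 := by simpa only [Fin.sum_univ_two] using hx.2
  refine ⟨x 1, funext fun i => ?_⟩
  fin_cases i
  · change x 0 = x 1 * -1 + 1
    linarith
  · change x 1 = x 1 * 1 + 0
    ring

section Responses

variable {m n : ℕ} {ul uf : Fin m → Fin n → ℝ} {δ : ℝ} {x : Fin m → ℝ}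

lemma continuous_mixU (u : Fin m → Fin n → ℝ) (j : Fin n) : Continuous fun x => mixU u x j :=
  (mixULinear u j).continuous_of_finiteDimensional

lemma mem_BRd_iff {j : Fin n} : j ∈ BRd uf δ x ↔ ∀ k, mixU uf x k < mixU uf x j + δ := by
  have : Nonempty (Fin n) := ⟨j⟩
  rw [BRd, Set.mem_ofPred_eq, gt_iff_lt, sub_lt_iff_lt_add, iSup,
    (Set.finite_range _).csSup_lt_iff (Set.range_nonempty _), Set.forall_mem_range]

lemma BRd_nonempty [NeZero n] (hδ : 0 < δ) : (BRd uf δ x).Nonempty := by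
  obtain ⟨j, hj⟩ := Finite.exists_max (mixU uf x)
  exact ⟨j, mem_BRd_iff.2 fun k => (hj k).trans_lt (lt_add_of_pos_right _ hδ)⟩

lemma isOpen_setOf_mem_BRd (uf : Fin m → Fin n → ℝ) (δ : ℝ) (j : Fin n) :
    IsOpen {x | j ∈ BRd uf δ x} := by
  simp only [mem_BRd_iff, Set.ofPred_forall]
  exact isOpen_iInter_of_finite fun k =>
    isOpen_lt (continuous_mixU uf k) ((continuous_mixU uf j).add_const δ)

lemma valBR_le {j : Fin n} (hj : j ∈ BRd uf δ x) : valBR ul uf δ x ≤ mixU ul x j :=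
  csInf_le (Set.toFinite _).bddBelow (Set.mem_image_of_mem _ hj)

lemma exists_mem_BRd_mixU_eq_valBR [NeZero n] (hδ : 0 < δ) :
    ∃ j ∈ BRd uf δ x, mixU ul x j = valBR ul uf δ x :=
  ((BRd_nonempty hδ).image _).csInf_mem (Set.toFinite _)

lemma upperSemicontinuous_valBR [NeZero n] (ul uf : Fin m → Fin n → ℝ) (hδ : 0 < δ) :
    UpperSemicontinuous (valBR ul uf δ) := by
  intro x c hc
  obtain ⟨j, hj, hjx⟩ := exists_mem_BRd_mixU_eq_valBR (ul := ul) (uf := uf) (x := x) hδ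
  filter_upwards [(isOpen_setOf_mem_BRd uf δ j).mem_nhds hj,
    (continuous_mixU ul j).continuousAt.eventually_lt_const (hjx.trans_lt hc)] with y hjy hyc
  exact (valBR_le hjy).trans_lt hyc

lemma exists_isMaxOn_valBR [NeZero m] [NeZero n] (ul uf : Fin m → Fin n → ℝ) (hδ : 0 < δ) :
    ∃ x ∈ simplex m, IsMaxOn (valBR ul uf δ) (simplex m) x :=
  ((upperSemicontinuous_valBR ul uf hδ).upperSemicontinuousOn _).exists_isMaxOn
    simplex_nonempty (isCompact_stdSimplex ℝ (Fin m))

lemma valBR_eq_uRSE_of_isMaxOn (hx : x ∈ simplex m)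
    (hmax : IsMaxOn (valBR ul uf δ) (simplex m) x) : valBR ul uf δ x = uRSE ul uf δ :=
  (IsGreatest.csSup_eq ⟨Set.mem_image_of_mem _ hx, Set.forall_mem_image.2 fun _ hy => hmax hy⟩).symm

lemma image_BRd_eq_singleton [NeZero n] (hδ : 0 < δ) {c : ℝ}
    (hc : ∀ j ∈ BRd uf δ x, mixU ul x j = c) : mixU ul x '' BRd uf δ x = {c} :=
  Set.eq_singleton_iff_nonempty_unique_mem.2
    ⟨(BRd_nonempty hδ).image _, Set.forall_mem_image.2 hc⟩

end Responses

section Inducing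

variable {m n : ℕ} {uf : Fin m → Fin n → ℝ} {δ : ℝ} {p q r x y : Fin m → ℝ} {j k l : Fin n}

lemma exists_induces_of_lt_indGap [NeZero m] (hδ : δ < indGap uf) (j : Fin n) :
    ∃ x ∈ simplex m, Induces uf δ j x := by
  have hj := hδ.trans_le (ciInf_le (Set.finite_range _).bddBelow j)
  obtain ⟨_, ⟨x, hx, rfl⟩, hδx⟩ := exists_lt_of_lt_csSup (simplex_nonempty.image _) hj
  refine ⟨x, hx, fun k hk => ?_⟩
  have hjk := hδx.trans_le (ciInf_le (Set.finite_range _).bddBelow ⟨k, hk⟩)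
  exact (lt_sub_iff_add_lt'.1 hjk).le

lemma notMem_BRd_of_add_le (h : mixU uf x j + δ ≤ mixU uf x k) : j ∉ BRd uf δ x :=
  fun hj => (mem_BRd_iff.1 hj k).not_ge h

lemma Induces.eq_of_mem_BRd (hp : Induces uf δ j p) (hl : l ∈ BRd uf δ p) : l = j := by
  by_contra hlj
  exact notMem_BRd_of_add_le (hp l hlj) hl

lemma Induces.notMem_BRd_of_wbtw (hδ : 0 < δ) (hjk : j ≠ k) (hp : Induces uf δ j p)
    (hq : Induces uf δ k q) (h : Wbtw ℝ p q y) : j ∉ BRd uf δ y := by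
  let f := (mixULinear uf k - mixULinear uf j).toAffineMap
  have hfp : f p ≤ -δ := by
    change mixU uf p k - mixU uf p j ≤ -δ
    linarith [hp k hjk.symm]
  have hfq : δ ≤ f q := le_sub_iff_add_le'.2 (hq j hjk)
  have hfy : δ ≤ f y := hfq.trans (affineMap_le_of_wbtw_of_lt f h (by linarith))
  exact notMem_BRd_of_add_le (le_sub_iff_add_le'.1 hfy)

lemma Induces.wbtw_of_mem_BRd (hδ : 0 < δ) (hjk : j ≠ k) (hp : Induces uf δ j p)
    (hq : Induces uf δ k q) (hcol : Collinear ℝ {p, x, q}) (hj : j ∈ BRd uf δ x)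
    (hk : k ∈ BRd uf δ x) : Wbtw ℝ p x q := by
  rcases hcol.wbtw_or_wbtw_or_wbtw with h | h | h
  · exact h
  · exact absurd hj (hp.notMem_BRd_of_wbtw hδ hjk hq h.symm)
  · exact absurd hk (hq.notMem_BRd_of_wbtw hδ hjk.symm hp h)

lemma Induces.notMem_BRd_of_wbtw_of_wbtw (hδ : 0 < δ) (hlj : l ≠ j) (hlk : l ≠ k)
    (hp : Induces uf δ j p) (hq : Induces uf δ k q) (hr : Induces uf δ l r)
    (hcol : Collinear ℝ {p, r, q}) (hj : j ∈ BRd uf δ x) (hk : k ∈ BRd uf δ x)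
    (hx : Wbtw ℝ p x q) (hy : Wbtw ℝ p y q) : l ∉ BRd uf δ y := by
  rcases hcol.wbtw_or_wbtw_or_wbtw with h | h | h
  · rcases wbtw_or_wbtw_of_wbtw_of_wbtw hx h with hprx | hxrq
    · exact absurd hj (hp.notMem_BRd_of_wbtw hδ hlj.symm hr hprx)
    · exact absurd hk (hq.notMem_BRd_of_wbtw hδ hlk.symm hr hxrq.symm)
  · exact hr.notMem_BRd_of_wbtw hδ hlk hq (h.trans_right_left hy.symm)
  · exact hr.notMem_BRd_of_wbtw hδ hlj hp (h.symm.trans_right_left hy)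

end Inducing

section Improvement

variable {m n : ℕ} {ul uf : Fin m → Fin n → ℝ} {δ : ℝ} {S : Set (Fin m → ℝ)} {x : Fin m → ℝ}

lemma exists_constant_payoff_of_mem_BRd (hδ : 0 < δ) (hcol : Collinear ℝ S) (hconv : Convex ℝ S)
    (hind : ∀ j, ∃ p ∈ S, Induces uf δ j p) (hx : x ∈ S) {j k : Fin n} (hjk : j ≠ k)
    (hj : j ∈ BRd uf δ x) (hk : k ∈ BRd uf δ x) (hle : mixU ul x j ≤ mixU ul x k) :
    ∃ y ∈ S, ∃ c, mixU ul x j ≤ c ∧ ∀ l ∈ BRd uf δ y, mixU ul y l = c := by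
  choose p hpS hp using hind
  have hcol₃ : ∀ {a b c}, a ∈ S → b ∈ S → c ∈ S → Collinear ℝ {a, b, c} := fun ha hb hc =>
    hcol.subset (by simp [Set.insert_subset_iff, ha, hb, hc])
  have hbtw : Wbtw ℝ (p j) x (p k) :=
    (hp j).wbtw_of_mem_BRd hδ hjk (hp k) (hcol₃ (hpS j) hx (hpS k)) hj hk
  by_cases hpj : mixU ul x j ≤ mixU ul (p j) j
  · exact ⟨p j, hpS j, _, hpj, fun l hl => by rw [(hp j).eq_of_mem_BRd hl]⟩
  by_cases hpk : mixU ul x j ≤ mixU ul (p k) k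
  · exact ⟨p k, hpS k, _, hpk, fun l hl => by rw [(hp k).eq_of_mem_BRd hl]⟩
  obtain ⟨y, hy, hjky, hjy⟩ := exists_mem_segment_eq_and_le
    (f := (mixULinear ul j).toAffineMap) (g := (mixULinear ul k).toAffineMap)
    (continuous_mixU ul j) (continuous_mixU ul k) hbtw (not_le.1 hpj) hle (not_le.1 hpk)
  refine ⟨y, hconv.segment_subset hx (hpS k) hy, mixU ul y j, hjy, fun l hl => ?_⟩
  by_contra hly
  refine (hp j).notMem_BRd_of_wbtw_of_wbtw hδ ?_ ?_ (hp k) (hp l)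
    (hcol₃ (hpS j) (hpS l) (hpS k)) hj hk hbtw
    (hbtw.trans_right (mem_segment_iff_wbtw.1 hy)) hl
  · rintro rfl
    exact hly rfl
  · rintro rfl
    exact hly hjky.symm

lemma exists_constant_payoff_ge_valBR [NeZero n] (hδ : 0 < δ) (hcol : Collinear ℝ S)
    (hconv : Convex ℝ S) (hind : ∀ j, ∃ p ∈ S, Induces uf δ j p) (hx : x ∈ S) :
    ∃ y ∈ S, ∃ c, valBR ul uf δ x ≤ c ∧ ∀ l ∈ BRd uf δ y, mixU ul y l = c := by
  by_cases hconst : ∀ l ∈ BRd uf δ x, mixU ul x l = valBR ul uf δ x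
  · exact ⟨x, hx, _, le_rfl, hconst⟩
  push Not at hconst
  obtain ⟨k, hk, hkx⟩ := hconst
  obtain ⟨j, hj, hjx⟩ := exists_mem_BRd_mixU_eq_valBR (ul := ul) (uf := uf) (x := x) hδ
  have hjk : j ≠ k := by
    rintro rfl
    exact hkx hjx
  rw [← hjx]
  exact exists_constant_payoff_of_mem_BRd hδ hcol hconv hind hx hjk hj hk
    (hjx.trans_le (valBR_le hk))

end Improvement

theorem exists_rse_tie_breaking_free_general {n : ℕ} [NeZero n] (ul uf : Fin 2 → Fin n → ℝ)
    {δ : ℝ} (hδ : 0 < δ) (hind : ∀ j, ∃ x ∈ simplex 2, Induces uf δ j x) :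
    ∃ x ∈ simplex 2, valBR ul uf δ x = uRSE ul uf δ ∧
      sSup (mixU ul x '' BRd uf δ x) = sInf (mixU ul x '' BRd uf δ x) := by
  obtain ⟨x, hx, hmax⟩ := exists_isMaxOn_valBR ul uf hδ
  obtain ⟨y, hy, c, hxc, hc⟩ := exists_constant_payoff_ge_valBR (ul := ul) hδ
    collinear_simplex_two (convex_stdSimplex ℝ (Fin 2)) hind hx
  have himage : mixU ul y '' BRd uf δ y = {c} := image_BRd_eq_singleton hδ hc
  have hyc : valBR ul uf δ y = c := by rw [valBR, himage, csInf_singleton]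
  have hymax : IsMaxOn (valBR ul uf δ) (simplex 2) y := fun z hz =>
    (hmax hz).trans (hxc.trans_eq hyc.symm)
  exact ⟨y, hy, valBR_eq_uRSE_of_isMaxOn hy hymax, by rw [himage, csSup_singleton, csInf_singleton]⟩

/-- when `m = 2` and `0 < δ < Δ`, some δ-RSE leader strategy has the same
leader payoff under every tie-breaking rule within the δ-optimal response set. -/
theorem exists_rse_tie_breaking_free (n : ℕ) (hn : 2 ≤ n) (ul uf : Fin 2 → Fin n → ℝ)
    (hul : ∀ i j, ul i j ∈ Set.Icc (0:ℝ) 1) (huf : ∀ i j, uf i j ∈ Set.Icc (0:ℝ) 1)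
    (hΔ : 0 < indGap uf) (δ : ℝ) (hδ : 0 < δ) (hδΔ : δ < indGap uf) :
    ∃ x ∈ simplex 2, valBR ul uf δ x = uRSE ul uf δ ∧
      sSup (mixU ul x '' BRd uf δ x) = sInf (mixU ul x '' BRd uf δ x) := by
  have : NeZero n := ⟨by lia⟩
  exact exists_rse_tie_breaking_free_general ul uf hδ (exists_induces_of_lt_indGap hδΔ)
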